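/- Let F be an algebraically closed field of characteristic p > 0 and set a = 1 if p > 2 and a = 2 if p = 2. Let M be a function field over F, and let t ∈ M be transcendental over F with M/F(t) separable and such that all zeros and poles of t are simple. Let w be a nonzero element of the subfield F(t) ⊆ M such that every prime v of M with v(w) ≠ 0 is unramified over F(t). Suppose there exist u, v ∈ M with 1/w − 1/t = u^{p^a} − u and w − t = v^{p^a} − v. Then there exists a natural number s ≥ 0 with w = t^{p^{as}}. -/

import Mathlib

/-- A prime of a function field `M` over a constant field `F`: a surjective additive
valuation `M → ℤ` that is trivial on `F`. -/
structure FFPrime (F M : Type*) [Field F] [Field M] [Algebra F M] where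
  v : M → ℤ
  map_mul : ∀ x y : M, x ≠ 0 → y ≠ 0 → v (x * y) = v x + v y
  add_min : ∀ x y : M, x ≠ 0 → y ≠ 0 → x + y ≠ 0 → min (v x) (v y) ≤ v (x + y)
  surj : ∀ n : ℤ, ∃ x : M, x ≠ 0 ∧ v x = n
  triv : ∀ c : F, c ≠ 0 → v (algebraMap F M c) = 0

/-- A prime of `M` is unramified over `F(t)` if some nonzero element of `F(t)` has
valuation `1`. -/
def FFPrime.UnramifiedOver {F M : Type*} [Field F] [Field M] [Algebra F M]
    (P : FFPrime F M) (t : M) : Prop :=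
  ∃ r : M, r ∈ IntermediateField.adjoin F {t} ∧ r ≠ 0 ∧ P.v r = 1

open Polynomial

namespace FFPrime

variable {F M : Type*} [Field F] [Field M] [Algebra F M] (P : FFPrime F M)

lemma v_one : P.v 1 = 0 := by
  simpa using P.triv 1 one_ne_zero

lemma v_pow {x : M} (hx : x ≠ 0) (n : ℕ) : P.v (x ^ n) = n * P.v x := by
  induction n with
  | zero => simpa using P.v_one
  | succ n ih =>
    rw [pow_succ, P.map_mul _ _ (pow_ne_zero n hx) hx, ih]
    push_cast
    ring

lemma v_neg {x : M} (hx : x ≠ 0) : P.v (-x) = P.v x := by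
  have h : P.v (-1) = 0 := by
    simpa using P.triv (-1) (neg_ne_zero.mpr one_ne_zero)
  rw [← neg_one_mul, P.map_mul _ _ (neg_ne_zero.mpr one_ne_zero) hx, h, zero_add]

lemma v_inv {x : M} (hx : x ≠ 0) : P.v x⁻¹ = -P.v x := by
  have h := P.map_mul x x⁻¹ hx (inv_ne_zero hx)
  rw [mul_inv_cancel₀ hx, P.v_one] at h
  linarith

lemma v_div {x y : M} (hx : x ≠ 0) (hy : y ≠ 0) : P.v (x / y) = P.v x - P.v y := by
  rw [div_eq_mul_inv, P.map_mul _ _ hx (inv_ne_zero hy), P.v_inv hy, sub_eq_add_neg]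

lemma v_sub_eq_left {x y : M} (hx : x ≠ 0) (hy : y ≠ 0) (h : P.v x < P.v y) :
    x - y ≠ 0 ∧ P.v (x - y) = P.v x := by
  have hne : x - y ≠ 0 := by
    intro h0
    rw [sub_eq_zero.mp h0] at h
    exact lt_irrefl _ h
  refine ⟨hne, ?_⟩
  have h1 := P.add_min x (-y) hx (neg_ne_zero.mpr hy) (by rwa [← sub_eq_add_neg])
  rw [P.v_neg hy, ← sub_eq_add_neg] at h1
  have h2 := P.add_min (x - y) y hne hy (by simpa using hx)
  rw [sub_add_cancel] at h2
  omega

lemma v_sub_eq_right {x y : M} (hx : x ≠ 0) (hy : y ≠ 0) (h : P.v y < P.v x) :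
    x - y ≠ 0 ∧ P.v (x - y) = P.v y := by
  obtain ⟨h1, h2⟩ := P.v_sub_eq_left hy hx h
  rw [← neg_sub y x]
  exact ⟨neg_ne_zero.mpr h1, (P.v_neg h1).trans h2⟩

/-- The order of a pole of `y ^ q - y` is divisible by `q`. -/
lemma dvd_v_pow_sub_self {q : ℕ} (hq : 2 ≤ q) {x y : M} (hxy : x = y ^ q - y)
    (hx : P.v x < 0) (hx0 : x ≠ 0) : (q : ℤ) ∣ P.v x := by
  subst hxy
  have hy : y ≠ 0 := by
    rintro rfl
    exact hx0 (by rw [zero_pow (by omega), sub_zero])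
  have hyq := pow_ne_zero q hy
  have hq' : (2 : ℤ) ≤ q := by exact_mod_cast hq
  rcases lt_or_ge (P.v y) 0 with hneg | hpos
  · obtain ⟨-, h⟩ := P.v_sub_eq_left hyq hy (by rw [P.v_pow hy]; nlinarith)
    rw [h, P.v_pow hy]
    exact dvd_mul_right _ _
  · have h := P.add_min (y ^ q) (-y) hyq (neg_ne_zero.mpr hy) (by rwa [← sub_eq_add_neg])
    rw [P.v_neg hy, ← sub_eq_add_neg, P.v_pow hy] at h
    have : 0 ≤ (q : ℤ) * P.v y := by positivity
    omega

variable {t : M}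

lemma ne_zero_of_transcendental (ht : Transcendental F t) : t ≠ 0 := by
  rintro rfl
  exact ht isAlgebraic_zero

lemma aeval_ne_zero (ht : Transcendental F t) {g : F[X]} (hg : g ≠ 0) : aeval t g ≠ 0 :=
  fun h ↦ hg (transcendental_iff.mp ht g h)

lemma sub_algebraMap_ne_zero (ht : Transcendental F t) (c : F) : t - algebraMap F M c ≠ 0 := by
  simpa using aeval_ne_zero ht (X_sub_C_ne_zero c)

lemma v_aeval [IsAlgClosed F] (ht : Transcendental F t) {g : F[X]} (hg : g ≠ 0) :
    P.v (aeval t g) = (g.roots.map fun r ↦ P.v (t - algebraMap F M r)).sum := by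
  have key : ∀ s : Multiset F, (aeval t (s.map fun r ↦ X - C r).prod ≠ 0) ∧
      P.v (aeval t (s.map fun r ↦ X - C r).prod) =
        (s.map fun r ↦ P.v (t - algebraMap F M r)).sum := by
    intro s
    induction s using Multiset.induction with
    | empty => simp [P.v_one]
    | cons r s ih =>
      have h := sub_algebraMap_ne_zero ht r
      simp only [Multiset.map_cons, Multiset.prod_cons, Multiset.sum_cons, _root_.map_mul, map_sub,
        aeval_X, aeval_C]
      exact ⟨mul_ne_zero h ih.1, by rw [P.map_mul _ _ h ih.1, ih.2]⟩
  have hl : g.leadingCoeff ≠ 0 := leadingCoeff_ne_zero.mpr hg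
  conv_lhs => rw [(IsAlgClosed.splits g).eq_prod_roots]
  rw [_root_.map_mul, aeval_C, P.map_mul _ _ (by simpa using hl) (key _).1, (key _).2, P.triv _ hl,
    zero_add]

lemma v_sub_of_pos (ht : Transcendental F t) {c : F} (hc : 0 < P.v (t - algebraMap F M c))
    {r : F} (hr : r ≠ c) : P.v (t - algebraMap F M r) = 0 := by
  have h0 : r - c ≠ 0 := sub_ne_zero.mpr hr
  have h := P.v_sub_eq_right (sub_algebraMap_ne_zero ht c)
    (y := algebraMap F M (r - c)) ((_root_.map_ne_zero _).mpr h0) (by rwa [P.triv _ h0])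
  rw [P.triv _ h0] at h
  rw [← h.2, map_sub]
  congr 1
  ring

lemma v_sub_of_neg (ht : Transcendental F t) (h : P.v t < 0) (r : F) :
    P.v (t - algebraMap F M r) = P.v t := by
  rcases eq_or_ne r 0 with rfl | hr
  · simp
  · exact (P.v_sub_eq_left (ne_zero_of_transcendental ht) (by simpa using hr) (by rwa [P.triv _ hr])).2

lemma v_aeval_of_pos [IsAlgClosed F] (ht : Transcendental F t) {c : F}
    (hc : 0 < P.v (t - algebraMap F M c)) {g : F[X]} (hg : g ≠ 0) :
    P.v (aeval t g) = g.rootMultiplicity c * P.v (t - algebraMap F M c) := by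
  classical
  rw [P.v_aeval ht hg, ← count_roots]
  induction g.roots using Multiset.induction with
  | empty => simp
  | cons r s ih =>
    rw [Multiset.map_cons, Multiset.sum_cons, ih, Multiset.count_cons]
    by_cases h : r = c
    · subst h
      simp
      ring
    · rw [P.v_sub_of_pos ht hc h, if_neg (Ne.symm h)]
      simp

lemma v_aeval_of_neg [IsAlgClosed F] (ht : Transcendental F t) (h : P.v t < 0) {g : F[X]}
    (hg : g ≠ 0) : P.v (aeval t g) = g.natDegree * P.v t := by
  simp [P.v_aeval ht hg, P.v_sub_of_neg ht h, (IsAlgClosed.splits g).natDegree_eq_card_roots]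

lemma v_sub_eq_one_of_unramified [IsAlgClosed F] (ht : Transcendental F t) {c : F}
    (hc : 0 < P.v (t - algebraMap F M c)) (h : P.UnramifiedOver t) :
    P.v (t - algebraMap F M c) = 1 := by
  obtain ⟨r, hr, hr0, hr1⟩ := h
  obtain ⟨g₁, g₂, rfl⟩ := (IntermediateField.mem_adjoin_simple_iff F r).mp hr
  obtain ⟨h1, h2⟩ := div_ne_zero_iff.mp hr0
  rw [P.v_div h1 h2, P.v_aeval_of_pos ht hc (by rintro rfl; simp at h1),
    P.v_aeval_of_pos ht hc (by rintro rfl; simp at h2), ← sub_mul] at hr1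
  exact Int.eq_one_of_dvd_one hc.le ⟨_, by rw [mul_comm]; exact hr1.symm⟩

end FFPrime

open IntermediateField algebraAdjoinAdjoin in
/-- Every transcendental element over which `M` is finite separable has a zero. -/
lemma exists_FFPrime_v_pos {F M : Type*} [Field F] [Field M] [Algebra F M] {s : M}
    (hs : Transcendental F s) (hfin : FiniteDimensional (IntermediateField.adjoin F {s}) M)
    (hsep : Algebra.IsSeparable (IntermediateField.adjoin F {s}) M) :
    ∃ P : FFPrime F M, 0 < P.v s := by
  let A := Algebra.adjoin F {s}
  let e : F[X] ≃ₐ[F] A := Polynomial.algEquivOfTranscendental F s hs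
  have hPIR : IsPrincipalIdealRing A := IsPrincipalIdealRing.of_surjective e.toRingHom e.surjective
  have hDed : IsDedekindDomain A := inferInstance
  have hI : IsFractionRing A (IntermediateField.adjoin F {s}) := inferInstance
  have hT : IsScalarTower A (IntermediateField.adjoin F {s}) M := inferInstance
  have hB : IsDedekindDomain (integralClosure A M) :=
    integralClosure.isDedekindDomain A (IntermediateField.adjoin F {s}) M
  have hFr : IsFractionRing (integralClosure A M) M :=
    integralClosure.isFractionRing_of_finite_extension (IntermediateField.adjoin F {s}) M
  let s₀ : A := e X
  have hs₀ : (s₀ : M) = s :=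
    congrArg Subtype.val (algEquivOfTranscendental_apply_X F s hs)
  have hnu : ¬ IsUnit (algebraMap A (integralClosure A M) s₀) := by
    intro h
    have hloc : IsLocalHom (algebraMap A (integralClosure A M)) :=
      (algebraMap_isIntegral_iff.mpr inferInstance).isLocalHom
        (fun x y hxy ↦ Subtype.ext (congrArg (algebraMap (integralClosure A M) M) hxy))
    have h1 : IsUnit s₀ := isUnit_of_map_unit _ _ h
    exact not_isUnit_X ((MulEquiv.isUnit_map e).mp h1)
  obtain ⟨m, hm, hsm⟩ := exists_max_ideal_of_mem_nonunits hnu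
  have hs₁ : ((algebraMap A (integralClosure A M) s₀ : integralClosure A M) : M) = s := hs₀
  let w : IsDedekindDomain.HeightOneSpectrum (integralClosure A M) :=
    ⟨m, hm.isPrime, by
      rintro rfl
      apply (FFPrime.ne_zero_of_transcendental hs)
      rw [← hs₁, (Ideal.mem_bot).mp hsm]
      rfl⟩
  have hle : ∀ c : F, w.valuation M (algebraMap F M c) ≤ 1 := fun c ↦
    w.valuation_le_one (K := M) (algebraMap A (integralClosure A M) (algebraMap F A c))
  refine ⟨⟨fun x ↦ -WithZero.log (w.valuation M x), ?_, ?_, ?_, ?_⟩, ?_⟩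
  · intro x y hx hy
    rw [map_mul, WithZero.log_mul (by simpa using hx) (by simpa using hy), neg_add]
  · intro x y hx hy hxy
    have hx' : w.valuation M x ≠ 0 := by simpa using hx
    have hy' : w.valuation M y ≠ 0 := by simpa using hy
    have hxy' : w.valuation M (x + y) ≠ 0 := by simpa using hxy
    rcases (w.valuation M).map_add' x y with h | h
    · exact (min_le_left _ _).trans (neg_le_neg ((WithZero.log_le_log hxy' hx').mpr h))
    · exact (min_le_right _ _).trans (neg_le_neg ((WithZero.log_le_log hxy' hy').mpr h))
  · intro n
    obtain ⟨π, hπ⟩ := w.valuation_exists_uniformizer M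
    refine ⟨π ^ n, zpow_ne_zero _ ?_, ?_⟩
    · rintro rfl
      rw [map_zero] at hπ
      exact WithZero.exp_ne_zero hπ.symm
    · rw [map_zpow₀, hπ, WithZero.log_zpow, WithZero.log_exp]
      simp
  · intro c hc
    have h : w.valuation M (algebraMap F M c) = 1 := by
      refine le_antisymm (hle c) ?_
      have h2 := hle c⁻¹
      rw [map_inv₀, map_inv₀] at h2
      exact (inv_le_one₀ (by simpa [zero_lt_iff] using hc)).mp h2
    rw [h, WithZero.log_one, neg_zero]
  · have h : w.valuation M s < 1 := by
      have h1 := (w.valuation_lt_one_iff_mem (K := M) _).mpr hsm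
      exact (congrArg (w.valuation M) hs₁) ▸ h1
    have := (WithZero.log_lt_log (by simpa using (FFPrime.ne_zero_of_transcendental hs)) one_ne_zero).mpr h
    rw [WithZero.log_one] at this
    exact neg_pos.mpr this

/-- A polynomial all of whose root multiplicities are divisible by `q` is a `q`-th power. -/
lemma exists_eq_pow_of_dvd_rootMultiplicity {F : Type*} [Field F] [IsAlgClosed F] {q : ℕ}
    (hq : 0 < q) {g : F[X]} (h : ∀ c, q ∣ g.rootMultiplicity c) : ∃ k : F[X], g = k ^ q := by
  classical
  obtain ⟨l, hl⟩ := IsAlgClosed.exists_pow_nat_eq g.leadingCoeff hq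
  refine ⟨C l * ∏ c ∈ g.roots.toFinset, (X - C c) ^ (g.rootMultiplicity c / q), ?_⟩
  conv_lhs => rw [(IsAlgClosed.splits g).eq_prod_roots]
  rw [mul_pow, ← C_pow, hl, ← Finset.prod_pow, Finset.prod_multiset_map_count]
  congr 1
  refine Finset.prod_congr rfl fun c _ ↦ ?_
  rw [← pow_mul, Nat.div_mul_cancel (h c), count_roots]

namespace FFPrime

variable {F M : Type*} [Field F] [Field M] [Algebra F M] (P : FFPrime F M)

lemma dvd_v_of_sub_eq {q : ℕ} (hq : 2 ≤ q) {x y z : M} (hx : x ≠ 0) (hy : y ≠ 0)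
    (h : x - y = z ^ q - z) (hxy : P.v x < P.v y) (hneg : P.v x < 0) : (q : ℤ) ∣ P.v x := by
  obtain ⟨h1, h2⟩ := P.v_sub_eq_left hx hy hxy
  have h3 := P.dvd_v_pow_sub_self hq h (by rwa [h2]) h1
  rwa [h2] at h3

lemma v_eq_neg_one_or_dvd {q : ℕ} (hq : 2 ≤ q) {x y z : M} (hx : x ≠ 0) (hy : y ≠ 0)
    (h : x - y = z ^ q - z) (hv : P.v y = -1) :
    P.v x < 0 ∧ (P.v x = -1 ∨ (q : ℤ) ∣ P.v x) := by
  rcases lt_trichotomy (P.v x) (-1) with hlt | heq | hgt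
  · exact ⟨by omega, Or.inr (P.dvd_v_of_sub_eq hq hx hy h (by omega) (by omega))⟩
  · exact ⟨by omega, Or.inl heq⟩
  · obtain ⟨h1, h2⟩ := P.v_sub_eq_right hx hy (by omega)
    have h3 := P.dvd_v_pow_sub_self hq h (by omega) h1
    rw [h2, hv] at h3
    have := Int.le_of_dvd (by norm_num) ((dvd_neg).mp h3)
    omega

variable {t : M}

lemma v_aeval_eq_rootMultiplicity [IsAlgClosed F] (ht : Transcendental F t) {c : F}
    (hc : P.v (t - algebraMap F M c) = 1) {g : F[X]} (hg : g ≠ 0) :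
    P.v (aeval t g) = g.rootMultiplicity c := by
  rw [P.v_aeval_of_pos ht (hc ▸ one_pos) hg, hc, mul_one]

/-- If `t * A ^ q / B ^ q - t` is of the form `v ^ q - v` and `B` vanishes at a nonzero `c` above
which `M` has an unramified prime, then `A` vanishes at `c` as well. -/
lemma eval_eq_zero_of_unramified [IsAlgClosed F] {p a q : ℕ} [Fact p.Prime] [CharP F p]
    (hq : q = p ^ a) (hq3 : 3 ≤ q) (ht : Transcendental F t) {A B : F[X]} (hB : B ≠ 0)
    {v : M} (hv : t * aeval t A ^ q / aeval t B ^ q - t = v ^ q - v) {c : F} (hc0 : c ≠ 0)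
    (hc : P.v (t - algebraMap F M c) = 1) (hBc : B.IsRoot c) : A.eval c = 0 := by
  by_contra hAc
  have hCM : CharP M p := charP_of_injective_algebraMap (algebraMap F M).injective p
  have hn : 0 < B.rootMultiplicity c := (rootMultiplicity_pos hB).mpr hBc
  set n := B.rootMultiplicity c with hn_def
  obtain ⟨B₀, hB₀, hB₀c⟩ := exists_eq_pow_rootMultiplicity_mul_and_not_dvd B hB c
  rw [← hn_def] at hB₀
  rw [dvd_iff_isRoot, IsRoot.def] at hB₀c
  obtain ⟨γ₀, hγ₀⟩ := IsAlgClosed.exists_pow_nat_eq c (n := q) (by omega)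
  have hγ₀0 : γ₀ ≠ 0 := by
    rintro rfl
    exact hc0 (by rw [← hγ₀, zero_pow (by omega)])
  set γ : F := γ₀ * A.eval c / B₀.eval c with hγ
  obtain ⟨D, hD⟩ : X - C c ∣ C γ₀ * A - C γ * B₀ := by
    rw [dvd_iff_isRoot, IsRoot.def]
    simp only [eval_sub, eval_mul, eval_C, hγ]
    field_simp
    ring
  obtain ⟨m, rfl⟩ : ∃ m, q = m + 3 := ⟨q - 3, by omega⟩
  set R : F[X] := A ^ (m + 3) + (X - C c) * ((X - C c) ^ (m + 1) * D ^ (m + 3)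
    - X * (X - C c) ^ ((m + 3) * n - 2) * B₀ ^ (m + 3)
    + C γ * (X - C c) ^ ((m + 2) * n - 2) * B₀ ^ (m + 3)) with hR
  have hRc : R.eval c ≠ 0 := by
    simp [hR, hAc]
  have hR0 : R ≠ 0 := by
    rintro h
    simp [h] at hRc
  have hB₀0 : B₀ ≠ 0 := by
    rintro rfl
    simp at hB₀c
  set τ := t - algebraMap F M c with hτ
  have hτ0 : τ ≠ 0 := sub_algebraMap_ne_zero ht c
  have haB : aeval t B₀ ≠ 0 := aeval_ne_zero ht hB₀0
  have haR : aeval t R ≠ 0 := aeval_ne_zero ht hR0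
  set z := v - algebraMap F M γ / τ ^ n with hz
  have key : τ * aeval t R / (τ ^ n * aeval t B₀) ^ (m + 3) = z ^ (m + 3) - z := by
    have e1 : z ^ (m + 3) = v ^ (m + 3) - (algebraMap F M γ / τ ^ n) ^ (m + 3) := by
      rw [hz, hq, sub_pow_char_pow]
    have e2 : z ^ (m + 3) - z = t * aeval t A ^ (m + 3) / aeval t B ^ (m + 3) - t
        - (algebraMap F M γ / τ ^ n) ^ (m + 3) + algebraMap F M γ / τ ^ n := by
      rw [e1, hv, hz]
      ring
    have e3 : aeval t B = τ ^ n * aeval t B₀ := by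
      conv_lhs => rw [hB₀]
      simp [hτ]
    have e4 : τ ^ (m + 3) * aeval t D ^ (m + 3) =
        algebraMap F M c * aeval t A ^ (m + 3) - algebraMap F M γ ^ (m + 3) *
          aeval t B₀ ^ (m + 3) := by
      have h := congrArg (aeval t) hD
      simp only [_root_.map_mul, map_sub, aeval_X, aeval_C, ← hτ] at h
      rw [← mul_pow, ← h, hq, sub_pow_char_pow, mul_pow, mul_pow, ← hq, ← map_pow, hγ₀]
    have e5 : aeval t R = aeval t A ^ (m + 3) + τ * (τ ^ (m + 1) * aeval t D ^ (m + 3)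
        - t * τ ^ ((m + 3) * n - 2) * aeval t B₀ ^ (m + 3)
        + algebraMap F M γ * τ ^ ((m + 2) * n - 2) * aeval t B₀ ^ (m + 3)) := by
      simp [hR, hτ]
    have e6 : τ ^ ((m + 3) * n) = τ ^ ((m + 3) * n - 2) * τ ^ 2 := by
      rw [← pow_add, Nat.sub_add_cancel (by nlinarith)]
    have e7 : τ ^ ((m + 2) * n) = τ ^ ((m + 2) * n - 2) * τ ^ 2 := by
      rw [← pow_add, Nat.sub_add_cancel (by nlinarith)]
    have hτn : τ ^ n ≠ 0 := pow_ne_zero _ hτ0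
    have hden : (τ ^ n * aeval t B₀) ^ (m + 3) ≠ 0 := pow_ne_zero _ (mul_ne_zero hτn haB)
    have e8 : (algebraMap F M γ / τ ^ n) ^ (m + 3) * (τ ^ n * aeval t B₀) ^ (m + 3) =
        algebraMap F M γ ^ (m + 3) * aeval t B₀ ^ (m + 3) := by
      rw [← mul_pow, ← mul_pow]
      congr 1
      field_simp
    have e9 : algebraMap F M γ / τ ^ n * (τ ^ n * aeval t B₀) ^ (m + 3) =
        algebraMap F M γ * τ ^ ((m + 2) * n) * aeval t B₀ ^ (m + 3) := by
      rw [mul_pow, ← pow_mul, show n * (m + 3) = n + (m + 2) * n by ring, pow_add]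
      field_simp
    have e10 : (τ ^ n * aeval t B₀) ^ (m + 3) = τ ^ ((m + 3) * n) * aeval t B₀ ^ (m + 3) := by
      rw [mul_pow, ← pow_mul, mul_comm n]
    rw [e2, e3, div_eq_iff hden, add_mul, sub_mul (_ - t), sub_mul (_ / _) t, div_mul_cancel₀ _ hden, e8, e9, e10,
      e5, e6, e7]
    have e11 : t = τ + algebraMap F M c := by rw [hτ]; ring
    linear_combination e4 - aeval t A ^ (m + 3) * e11
  have hvR : P.v (aeval t R) = 0 := by
    rw [P.v_aeval_eq_rootMultiplicity ht hc hR0, rootMultiplicity_eq_zero hRc, Nat.cast_zero]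
  have hvB : P.v (aeval t B₀) = 0 := by
    rw [P.v_aeval_eq_rootMultiplicity ht hc hB₀0, rootMultiplicity_eq_zero hB₀c, Nat.cast_zero]
  have hτn : τ ^ n * aeval t B₀ ≠ 0 := mul_ne_zero (pow_ne_zero _ hτ0) haB
  have hvx : P.v (τ * aeval t R / (τ ^ n * aeval t B₀) ^ (m + 3)) = 1 - ((m + 3 : ℕ) : ℤ) * n := by
    rw [P.v_div (mul_ne_zero hτ0 haR) (pow_ne_zero _ hτn), P.map_mul _ _ hτ0 haR, P.v_pow hτn,
      P.map_mul _ _ (pow_ne_zero _ hτ0) haB, P.v_pow hτ0, hc, hvR, hvB]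
    ring
  have hn' : (1 : ℤ) ≤ n := by exact_mod_cast hn
  have hdvd := P.dvd_v_pow_sub_self (by omega) key (by rw [hvx]; push_cast; nlinarith)
    (div_ne_zero (mul_ne_zero hτ0 haR) (pow_ne_zero _ hτn))
  rw [hvx] at hdvd
  have h1 : ((m + 3 : ℕ) : ℤ) ∣ 1 := (dvd_sub_left (dvd_mul_right _ _)).mp hdvd
  have := Int.le_of_dvd one_pos h1
  omega

end FFPrime

section

variable {F M : Type*} [Field F] [Field M] [Algebra F M] [IsAlgClosed F] {t : M}

/-- The shape of a fraction `A / B` of polynomials in `t` for which both `w - t` and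
`1 / w - 1 / t` are of the form `y ^ q - y`, when the relevant primes are unramified. -/
lemma dvd_rootMultiplicity_of_sub_eq {q : ℕ} (hq : 2 ≤ q) (ht : Transcendental F t)
    (h0 : ∃ P : FFPrime F M, P.v t = 1) (hinf : ∃ P : FFPrime F M, P.v t = -1)
    {A B : F[X]} (hA : A ≠ 0) (hB : B ≠ 0) (hAB : IsCoprime A B)
    (hP : ∀ c, A.IsRoot c ∨ B.IsRoot c → ∃ P : FFPrime F M, P.v (t - algebraMap F M c) = 1)
    {u v : M} (hu : (aeval t A / aeval t B)⁻¹ - t⁻¹ = u ^ q - u)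
    (hv : aeval t A / aeval t B - t = v ^ q - v) :
    (∀ c, q ∣ B.rootMultiplicity c) ∧ (∀ c, c ≠ 0 → q ∣ A.rootMultiplicity c) ∧
    A.IsRoot 0 ∧ (A.rootMultiplicity 0 = 1 ∨ q ∣ A.rootMultiplicity 0) ∧
    ∃ d : ℕ, A.natDegree = B.natDegree + d ∧ (d = 1 ∨ q ∣ d) := by
  have ht0 : t ≠ 0 := FFPrime.ne_zero_of_transcendental ht
  have hA' := FFPrime.aeval_ne_zero ht hA
  have hB' := FFPrime.aeval_ne_zero ht hB
  have hw : aeval t A / aeval t B ≠ 0 := div_ne_zero hA' hB'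
  have hcop : ∀ c, A.IsRoot c → ¬ B.IsRoot c := fun c h1 h2 ↦ by
    obtain ⟨x, y, hxy⟩ := hAB
    have := congrArg (eval c) hxy
    simp [h1.eq_zero, h2.eq_zero] at this
  have hvw : ∀ (P : FFPrime F M) (c : F), P.v (t - algebraMap F M c) = 1 →
      P.v (aeval t A / aeval t B) = A.rootMultiplicity c - B.rootMultiplicity c := by
    intro P c hc
    rw [P.v_div hA' hB', P.v_aeval_eq_rootMultiplicity ht hc hA,
      P.v_aeval_eq_rootMultiplicity ht hc hB]
  obtain ⟨P0, hP0⟩ := h0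
  have hP0' : P0.v (t - algebraMap F M 0) = 1 := by simpa using hP0
  have hzero := P0.v_eq_neg_one_or_dvd hq (inv_ne_zero hw) (inv_ne_zero ht0) hu
    (by rw [P0.v_inv ht0, hP0])
  rw [P0.v_inv hw, hvw P0 0 hP0'] at hzero
  have hA0 : A.IsRoot 0 := by
    rw [← rootMultiplicity_pos hA]
    omega
  have hB0 : B.rootMultiplicity 0 = 0 := rootMultiplicity_eq_zero (hcop 0 hA0)
  refine ⟨fun c ↦ ?_, fun c hc0 ↦ ?_, hA0, ?_, ?_⟩
  · by_cases hc : B.IsRoot c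
    · obtain ⟨P, hPc⟩ := hP c (Or.inr hc)
      have hAc : A.rootMultiplicity c = 0 := rootMultiplicity_eq_zero fun h ↦ hcop c h hc
      have hpos := (rootMultiplicity_pos hB).mpr hc
      have hc0 : (0 : F) ≠ c := by
        rintro rfl
        omega
      have hvt : P.v t = 0 := by simpa using P.v_sub_of_pos ht (hPc ▸ one_pos) hc0
      have h := P.dvd_v_of_sub_eq hq hw ht0 hv (by rw [hvw P c hPc, hvt]; omega)
        (by rw [hvw P c hPc]; omega)
      rw [hvw P c hPc, hAc, Nat.cast_zero, zero_sub, dvd_neg] at h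
      exact_mod_cast h
    · rw [rootMultiplicity_eq_zero hc]
      exact dvd_zero q
  · by_cases hc : A.IsRoot c
    · obtain ⟨P, hPc⟩ := hP c (Or.inl hc)
      have hBc : B.rootMultiplicity c = 0 := rootMultiplicity_eq_zero (hcop c hc)
      have hpos := (rootMultiplicity_pos hA).mpr hc
      have hvt : P.v t = 0 := by simpa using P.v_sub_of_pos ht (hPc ▸ one_pos) hc0.symm
      have h := P.dvd_v_of_sub_eq hq (inv_ne_zero hw) (inv_ne_zero ht0) hu
        (by rw [P.v_inv hw, P.v_inv ht0, hvw P c hPc, hvt]; omega)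
        (by rw [P.v_inv hw, hvw P c hPc]; omega)
      rw [P.v_inv hw, hvw P c hPc, hBc, Nat.cast_zero, sub_zero, dvd_neg] at h
      exact_mod_cast h
    · rw [rootMultiplicity_eq_zero hc]
      exact dvd_zero q
  · rw [hB0, Nat.cast_zero, sub_zero, dvd_neg] at hzero
    refine hzero.2.imp (fun h ↦ by omega) fun h ↦ by exact_mod_cast h
  · obtain ⟨P, hPt⟩ := hinf
    have h := P.v_eq_neg_one_or_dvd hq hw ht0 hv hPt
    rw [P.v_div hA' hB', P.v_aeval_of_neg ht (by omega) hA, P.v_aeval_of_neg ht (by omega) hB,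
      hPt] at h
    obtain ⟨d, hd⟩ : ∃ d : ℕ, A.natDegree = B.natDegree + d :=
      ⟨A.natDegree - B.natDegree, by omega⟩
    refine ⟨d, hd, h.2.imp (fun h ↦ by omega) fun h ↦ ?_⟩
    rw [hd, show ((B.natDegree + d : ℕ) : ℤ) * -1 - B.natDegree * -1 = -d by push_cast; ring,
      dvd_neg] at h
    exact_mod_cast h

lemma exists_eq_pow_pow_of_sub_eq {p a q : ℕ} [Fact p.Prime] [CharP F p]
    (hq : q = p ^ a) (hq3 : 3 ≤ q) (ht : Transcendental F t)
    (h0 : ∃ P : FFPrime F M, P.v t = 1) (hinf : ∃ P : FFPrime F M, P.v t = -1)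
    (n : ℕ) : ∀ A B : F[X], A.natDegree = n → A ≠ 0 → B ≠ 0 → IsCoprime A B →
    (∀ c, A.IsRoot c ∨ B.IsRoot c → ∃ P : FFPrime F M, P.v (t - algebraMap F M c) = 1) →
    ∀ u v : M, (aeval t A / aeval t B)⁻¹ - t⁻¹ = u ^ q - u →
    aeval t A / aeval t B - t = v ^ q - v → ∃ s : ℕ, aeval t A / aeval t B = t ^ q ^ s := by
  have hCM : CharP M p := charP_of_injective_algebraMap (algebraMap F M).injective p
  have ht0 : t ≠ 0 := FFPrime.ne_zero_of_transcendental ht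
  have hq0 : q ≠ 0 := by omega
  induction n using Nat.strong_induction_on with
  | _ n ih =>
    intro A B hn hA hB hAB hP u v hu hv
    obtain ⟨hBdvd, hAdvd, hA0, hA0dvd, d, hd, hd'⟩ :=
      dvd_rootMultiplicity_of_sub_eq (by omega) ht h0 hinf hA hB hAB hP hu hv
    obtain ⟨B₁, rfl⟩ := exists_eq_pow_of_dvd_rootMultiplicity (by omega) hBdvd
    have hB₁ : B₁ ≠ 0 := by
      rintro rfl
      exact hB (zero_pow hq0)
    rcases hA0dvd with h1 | hdvd
    · obtain ⟨A₀, hA₀, hA₀0⟩ := exists_eq_pow_rootMultiplicity_mul_and_not_dvd A hA 0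
      rw [h1, C_0, sub_zero, pow_one] at hA₀
      rw [dvd_iff_isRoot] at hA₀0
      subst hA₀
      have hA₀ne : A₀ ≠ 0 := right_ne_zero_of_mul hA
      obtain ⟨A₁, rfl⟩ := exists_eq_pow_of_dvd_rootMultiplicity (g := A₀) (q := q) (by omega) (by
        intro c
        by_cases hc : c = 0
        · subst hc
          rw [rootMultiplicity_eq_zero hA₀0]
          exact dvd_zero q
        · have h := hAdvd c hc
          rwa [rootMultiplicity_mul hA, rootMultiplicity_eq_zero (p := X) (by simpa using hc),
            zero_add] at h)
      have hA₁ : A₁ ≠ 0 := by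
        rintro rfl
        exact hA₀ne (zero_pow hq0)
      have hcop : IsCoprime A₁ B₁ :=
        (IsCoprime.pow_iff (by omega) (by omega)).mp hAB.of_mul_left_right
      have hcopX : ¬ B₁.IsRoot 0 := by
        intro h
        obtain ⟨x, y, hxy⟩ := hAB
        have := congrArg (eval 0) hxy
        simp [h.eq_zero, hq0] at this
      have hv' : t * aeval t A₁ ^ q / aeval t B₁ ^ q - t = v ^ q - v := by
        simpa using hv
      have hBdeg : B₁.natDegree = 0 := by
        by_contra hdeg
        obtain ⟨c, hc⟩ := IsAlgClosed.exists_root B₁ fun h ↦ hdeg (natDegree_eq_of_degree_eq_some h)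
        obtain ⟨P, hPc⟩ := hP c (Or.inr (by simp [hc.eq_zero, hq0]))
        have hAc := P.eval_eq_zero_of_unramified hq hq3 ht hB₁ hv'
          (by rintro rfl; exact hcopX hc) hPc hc
        obtain ⟨x, y, hxy⟩ := hcop
        have := congrArg (eval c) hxy
        simp [hc.eq_zero, hAc] at this
      have hAdeg : A₁.natDegree = 0 := by
        rw [natDegree_mul X_ne_zero (right_ne_zero_of_mul hA), natDegree_X, natDegree_pow,
          natDegree_pow, hBdeg, mul_zero, zero_add] at hd
        rcases hd' with rfl | hqd
        · have : q * A₁.natDegree = 0 := by omega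
          exact (mul_eq_zero.mp this).resolve_left hq0
        · rw [← hd] at hqd
          have := (Nat.dvd_add_left (dvd_mul_right _ _)).mp hqd
          have := Nat.le_of_dvd one_pos this
          omega
      obtain ⟨α, rfl⟩ := natDegree_eq_zero.mp hAdeg
      obtain ⟨β, rfl⟩ := natDegree_eq_zero.mp hBdeg
      have hβ : β ≠ 0 := by simpa using hB₁
      set κ : F := α ^ q / β ^ q with hκ
      have hw : aeval t (X * C α ^ q) / aeval t (C β ^ q) = algebraMap F M κ * t := by
        simp [hκ]
        ring
      refine ⟨0, ?_⟩
      rw [hw] at hv ⊢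
      rw [pow_zero, pow_one]
      by_contra hne
      have hκ1 : κ - 1 ≠ 0 := fun h ↦ hne (by rw [sub_eq_zero.mp h, map_one, one_mul])
      obtain ⟨P, hPt⟩ := hinf
      have hκ1' : algebraMap F M (κ - 1) ≠ 0 := (_root_.map_ne_zero _).mpr hκ1
      have e : algebraMap F M κ * t - t = algebraMap F M (κ - 1) * t := by
        rw [map_sub, map_one]
        ring
      rw [e] at hv
      have hPv : P.v (algebraMap F M (κ - 1) * t) = -1 := by
        rw [P.map_mul _ _ hκ1' ht0, P.triv _ hκ1, hPt, zero_add]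
      have h := P.dvd_v_pow_sub_self (by omega) hv (by omega) (mul_ne_zero hκ1' ht0)
      rw [hPv, dvd_neg] at h
      have := Int.le_of_dvd one_pos h
      omega
    · obtain ⟨A₁, rfl⟩ := exists_eq_pow_of_dvd_rootMultiplicity (g := A) (q := q) (by omega) (by
        intro c
        by_cases hc : c = 0
        · exact hc ▸ hdvd
        · exact hAdvd c hc)
      have hA₁ : A₁ ≠ 0 := by
        rintro rfl
        exact hA (zero_pow hq0)
      have hroot : ∀ (g : F[X]) c, g.IsRoot c → (g ^ q).IsRoot c := fun g c h ↦ by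
        simp [h.eq_zero, hq0]
      have hlt : A₁.natDegree < n := by
        have hpos : A₁.natDegree ≠ 0 := by
          intro h
          obtain ⟨α, rfl⟩ := natDegree_eq_zero.mp h
          have h2 : α = 0 := by simpa [hq0] using hA0
          exact hA₁ (by rw [h2, C_0])
        rw [← hn, natDegree_pow]
        nlinarith [Nat.pos_of_ne_zero hpos]
      set w := aeval t A₁ / aeval t B₁ with hw
      have hwq : aeval t (A₁ ^ q) / aeval t (B₁ ^ q) = w ^ q := by
        rw [map_pow, map_pow, hw, div_pow]
      rw [hwq] at hu hv ⊢
      obtain ⟨s, hs⟩ := ih _ hlt A₁ B₁ rfl hA₁ hB₁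
        ((IsCoprime.pow_iff (by omega) (by omega)).mp hAB)
        (fun c hc ↦ hP c (hc.imp (hroot _ _) (hroot _ _))) (u - w⁻¹) (v - w)
        (by
          rw [hq, sub_pow_char_pow, ← hq, inv_pow]
          linear_combination hu)
        (by
          rw [hq, sub_pow_char_pow, ← hq]
          linear_combination hv)
      exact ⟨s + 1, by rw [hw, hs, pow_succ, pow_mul]⟩

end

lemma adjoin_simple_eq_of_mem {F M : Type*} [Field F] [Field M] [Algebra F M] {s t : M}
    (h1 : s ∈ IntermediateField.adjoin F {t})
    (h2 : t ∈ IntermediateField.adjoin F {s}) :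
    IntermediateField.adjoin F {s} = IntermediateField.adjoin F {t} :=
  le_antisymm (IntermediateField.adjoin_simple_le_iff.mpr h1)
    (IntermediateField.adjoin_simple_le_iff.mpr h2)

/-- Let `F` be algebraically closed of characteristic `p > 0`, with `a = 1` if `p > 2`
and `a = 2` if `p = 2`. Let `M` be a function field over `F` and `t ∈ M` transcendental
with `M/F(t)` finite separable and all zeros and poles of `t` simple. Let `w` be a
nonzero element of `F(t) ⊆ M` whose zeros and poles all lie at primes unramified over
`F(t)`. If there exist `u, v ∈ M` with `1/w - 1/t = u^{p^a} - u` and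
`w - t = v^{p^a} - v`, then `w = t^{p^{as}}` for some natural number `s`. -/
theorem stmt_15 {F M : Type*} [Field F] [Field M] [Algebra F M] [IsAlgClosed F]
    (p : ℕ) (hp : p.Prime) [CharP F p]
    (a : ℕ) (ha : (2 < p ∧ a = 1) ∨ (p = 2 ∧ a = 2))
    (t : M) (htrans : Transcendental F t)
    (hfin : FiniteDimensional (IntermediateField.adjoin F {t}) M)
    (hsep : Algebra.IsSeparable (IntermediateField.adjoin F {t}) M)
    (hsimple : ∀ P : FFPrime F M, P.v t ∈ ({-1, 0, 1} : Set ℤ))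
    (w : M) (hw0 : w ≠ 0) (hwmem : w ∈ IntermediateField.adjoin F {t})
    (hram : ∀ P : FFPrime F M, P.v w ≠ 0 → P.UnramifiedOver t)
    (hex : ∃ u v : M, 1 / w - 1 / t = u ^ p ^ a - u ∧ w - t = v ^ p ^ a - v) :
    ∃ s : ℕ, w = t ^ p ^ (a * s) := by
  have hpF : Fact p.Prime := ⟨hp⟩
  have hq3 : 3 ≤ p ^ a := by
    rcases ha with ⟨h, rfl⟩ | ⟨rfl, rfl⟩
    · rwa [pow_one]
    · norm_num
  have ht0 : t ≠ 0 := FFPrime.ne_zero_of_transcendental htrans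
  have htmem : t ∈ IntermediateField.adjoin F {t} := IntermediateField.mem_adjoin_simple_self F t
  have hzero : ∀ c : F, ∃ P : FFPrime F M, 0 < P.v (t - algebraMap F M c) := by
    intro c
    have hadj : IntermediateField.adjoin F {t - algebraMap F M c} =
        IntermediateField.adjoin F {t} :=
      adjoin_simple_eq_of_mem (sub_mem htmem (algebraMap_mem _ c)) (by
        simpa using add_mem (IntermediateField.mem_adjoin_simple_self F (t - algebraMap F M c))
          (algebraMap_mem (IntermediateField.adjoin F {t - algebraMap F M c}) c))
    refine exists_FFPrime_v_pos (fun h ↦ htrans ?_) (by rwa [hadj]) (by rwa [hadj])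
    simpa using h.add (isAlgebraic_algebraMap c)
  have h0 : ∃ P : FFPrime F M, P.v t = 1 := by
    obtain ⟨P, hP⟩ := hzero 0
    rw [map_zero, sub_zero] at hP
    have h := hsimple P
    simp only [Set.mem_insert_iff, Set.mem_singleton_iff] at h
    exact ⟨P, by omega⟩
  have hinf : ∃ P : FFPrime F M, P.v t = -1 := by
    have hadj : IntermediateField.adjoin F {t⁻¹} = IntermediateField.adjoin F {t} :=
      adjoin_simple_eq_of_mem (inv_mem htmem) (by
        simpa using inv_mem (IntermediateField.mem_adjoin_simple_self F t⁻¹))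
    obtain ⟨P, hP⟩ := exists_FFPrime_v_pos (F := F) (s := t⁻¹)
      (fun h ↦ htrans (by simpa using h.inv)) (by rwa [hadj]) (by rwa [hadj])
    rw [P.v_inv ht0] at hP
    have h := hsimple P
    simp only [Set.mem_insert_iff, Set.mem_singleton_iff] at h
    exact ⟨P, by omega⟩
  obtain ⟨A', B', hAB'⟩ := (IntermediateField.mem_adjoin_simple_iff F w).mp hwmem
  obtain ⟨hA'0, hB'0⟩ := div_ne_zero_iff.mp (hAB' ▸ hw0)
  have hA' : A' ≠ 0 := by rintro rfl; simp at hA'0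
  have hB' : B' ≠ 0 := by rintro rfl; simp at hB'0
  obtain ⟨A, B, hAB, hw, hA, hB⟩ : ∃ A B : F[X], IsCoprime A B ∧
      w = aeval t A / aeval t B ∧ A ≠ 0 ∧ B ≠ 0 := by
    classical
    obtain ⟨A, B, hAg, hBg⟩ : ∃ A B : F[X], A' = EuclideanDomain.gcd A' B' * A ∧
        B' = EuclideanDomain.gcd A' B' * B :=
      ⟨_, _, (EuclideanDomain.gcd_dvd_left A' B').choose_spec,
        (EuclideanDomain.gcd_dvd_right A' B').choose_spec⟩
    have hg : EuclideanDomain.gcd A' B' ≠ 0 := fun h ↦ hA' (EuclideanDomain.gcd_eq_zero_iff.mp h).1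
    refine ⟨A, B, ?_, ?_, ?_, ?_⟩
    · refine ⟨EuclideanDomain.gcdA A' B', EuclideanDomain.gcdB A' B', mul_left_cancel₀ hg ?_⟩
      have h := EuclideanDomain.gcd_eq_gcd_ab A' B'
      linear_combination (-1 : F[X]) * h - EuclideanDomain.gcdA A' B' * hAg
        - EuclideanDomain.gcdB A' B' * hBg
    · have h1 := congrArg (aeval t) hAg
      have h2 := congrArg (aeval t) hBg
      rw [map_mul] at h1 h2
      rw [hAB', h1, h2, mul_div_mul_left _ _ (FFPrime.aeval_ne_zero htrans hg)]
    · rintro rfl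
      exact hA' (by rw [hAg, mul_zero])
    · rintro rfl
      exact hB' (by rw [hBg, mul_zero])
  obtain ⟨u, v, hu, hv⟩ := hex
  rw [one_div, one_div] at hu
  have hP : ∀ c, A.IsRoot c ∨ B.IsRoot c →
      ∃ P : FFPrime F M, P.v (t - algebraMap F M c) = 1 := by
    intro c hc
    obtain ⟨P, hPc⟩ := hzero c
    refine ⟨P, P.v_sub_eq_one_of_unramified htrans hPc (hram P ?_)⟩
    rw [hw, P.v_div (FFPrime.aeval_ne_zero htrans hA) (FFPrime.aeval_ne_zero htrans hB),
      P.v_aeval_of_pos htrans hPc hA, P.v_aeval_of_pos htrans hPc hB, ← sub_mul]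
    refine mul_ne_zero ?_ hPc.ne'
    have hcop : ¬ (A.IsRoot c ∧ B.IsRoot c) := by
      rintro ⟨h1, h2⟩
      obtain ⟨x, y, hxy⟩ := hAB
      have h := congrArg (eval c) hxy
      simp [h1.eq_zero, h2.eq_zero] at h
    rcases hc with hc | hc
    · have h1 := (rootMultiplicity_pos hA).mpr hc
      have h2 : B.rootMultiplicity c = 0 := rootMultiplicity_eq_zero fun h ↦ hcop ⟨hc, h⟩
      omega
    · have h1 := (rootMultiplicity_pos hB).mpr hc
      have h2 : A.rootMultiplicity c = 0 := rootMultiplicity_eq_zero fun h ↦ hcop ⟨h, hc⟩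
      omega
  rw [hw] at hu hv ⊢
  obtain ⟨s, hs⟩ := exists_eq_pow_pow_of_sub_eq rfl hq3 htrans h0 hinf _ A B rfl hA hB hAB hP
    u v hu hv
  exact ⟨s, by rw [hs, pow_mul]⟩
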